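/- If g:(0,∞)→(0,∞) is differentiable with p⁻ - 1 ≤ t·g'(t)/g(t) ≤ p⁺ - 1 for all t>0, and G(t)=∫₀ᵗ g(τ)dτ, then p⁻ ≤ t·g(t)/G(t) ≤ p⁺ for all t>0. -/

import Mathlib

/-!
For a constant `c`, the function `F x = x * g x - c * G x` is continuous on `[0, ∞)`, vanishes at `0`
and has derivative `x * g' x - (c - 1) * g x` on `(0, ∞)`. With `c = p⁻` the hypothesis makes this
derivative nonnegative, with `c = p⁺` nonpositive, so `F` has the corresponding sign by monotonicity.
Dividing by `G t > 0` gives the two bounds. Both signs are cases of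
`nonneg_of_deriv_bound`.
-/

/-- Monotonicity argument for `s * (x * g x - c * ∫₀ˣ g)`; it is used with `s = 1` and `s = -1`. -/
lemma nonneg_of_deriv_bound (g : ℝ → ℝ) (c s : ℝ)
    (hgdiff : ∀ t > 0, DifferentiableAt ℝ g t)
    (hcont : ContinuousOn g (Set.Ici 0))
    (h : ∀ t > 0, 0 ≤ s * (t * deriv g t - (c - 1) * g t)) (t : ℝ) (ht : 0 < t) :
    0 ≤ s * (t * g t - c * ∫ τ in (0:ℝ)..t, g τ) := by
  -- Extending `g` by the constant `g 0` to the left makes it continuous on all of `ℝ`.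
  have hk : Continuous (fun τ => g (max τ 0)) :=
    hcont.comp_continuous (by fun_prop) (fun x => le_max_right x 0)
  have hI : ∫ τ in (0:ℝ)..t, g τ = ∫ τ in (0:ℝ)..t, g (max τ 0) := by
    refine intervalIntegral.integral_congr fun τ hτ => ?_
    rw [Set.uIcc_of_le ht.le] at hτ
    simp only [max_eq_left hτ.1]
  have hHd : ∀ x, HasDerivAt (fun u => ∫ τ in (0:ℝ)..u, g (max τ 0)) (g (max x 0)) x :=
    fun x => (hk.integral_hasStrictDerivAt 0 x).hasDerivAt
  have hHc : Continuous (fun u => ∫ τ in (0:ℝ)..u, g (max τ 0)) :=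
    continuous_iff_continuousAt.2 fun x => (hHd x).continuousAt
  have hFd : ∀ x > 0, HasDerivAt
      (fun u => s * (u * g u - c * ∫ τ in (0:ℝ)..u, g (max τ 0)))
      (s * ((1 * g x + x * deriv g x) - c * g (max x 0))) x := fun x hx =>
    ((((hasDerivAt_id x).mul (hgdiff x hx).hasDerivAt).sub ((hHd x).const_mul c)).const_mul s)
  have hmono : MonotoneOn (fun u => s * (u * g u - c * ∫ τ in (0:ℝ)..u, g (max τ 0)))
      (Set.Ici 0) := by
    refine monotoneOn_of_deriv_nonneg (convex_Ici 0) ?_ ?_ ?_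
    · exact continuousOn_const.mul ((continuousOn_id.mul hcont).sub
        (continuousOn_const.mul hHc.continuousOn))
    · intro x hx
      rw [interior_Ici] at hx
      exact (hFd x hx).differentiableAt.differentiableWithinAt
    · intro x hx
      rw [interior_Ici] at hx
      rw [(hFd x hx).deriv, max_eq_left (le_of_lt hx)]
      have := h x hx
      linarith
  have := hmono Set.self_mem_Ici ht.le ht.le
  rw [hI]
  simpa using this

/-- If `g : (0,∞) → (0,∞)` is differentiable with
`p⁻ - 1 ≤ t·g'(t)/g(t) ≤ p⁺ - 1` for all `t > 0`, and `G(t) = ∫₀ᵗ g`,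
then `p⁻ ≤ t·g(t)/G(t) ≤ p⁺` for all `t > 0`. -/
theorem stmt0 (g G : ℝ → ℝ) (pm pp : ℝ)
    (hpm : 1 < pm) (hpmpp : pm ≤ pp)
    (hgpos : ∀ t > 0, 0 < g t)
    (hgdiff : ∀ t > 0, DifferentiableAt ℝ g t)
    (hG : ∀ t, G t = ∫ τ in (0:ℝ)..t, g τ)
    (hcont : ContinuousOn g (Set.Ici 0))
    (hg0 : g 0 = 0)
    (hbound : ∀ t > 0, pm - 1 ≤ t * deriv g t / g t ∧ t * deriv g t / g t ≤ pp - 1) :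
    ∀ t > 0, pm ≤ t * g t / G t ∧ t * g t / G t ≤ pp := by
  intro t ht
  have hGpos : 0 < G t := by
    rw [hG]
    refine intervalIntegral.intervalIntegral_pos_of_pos_on ?_ (fun x hx => hgpos x hx.1) ht
    refine ContinuousOn.intervalIntegrable (hcont.mono ?_)
    rw [Set.uIcc_of_le ht.le]
    exact Set.Icc_subset_Ici_self
  have h1 := nonneg_of_deriv_bound g pm 1 hgdiff hcont (fun x hx => by
    have := (le_div_iff₀ (hgpos x hx)).1 (hbound x hx).1
    linarith) t ht
  have h2 := nonneg_of_deriv_bound g pp (-1) hgdiff hcont (fun x hx => by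
    have := (div_le_iff₀ (hgpos x hx)).1 (hbound x hx).2
    linarith) t ht
  rw [← hG] at h1 h2
  exact ⟨(le_div_iff₀ hGpos).2 (by linarith), (div_le_iff₀ hGpos).2 (by linarith)⟩
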